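/- arXiv:2502.19839 — 5 statements merged into one kernel-verified Lean document; each statement's English description precedes it below -/
import Mathlib

section
/- Let Ω be a (p+m_G)×(p+m_G) positive-definite real matrix, partitioned into blocks according to the partition (d₁,…,dₙ,m_G) of p+m_G, such that the block of Ω pairing the i-th and j-th of the first n block positions is zero whenever i ≠ j. Then the unique lower-triangular matrix L with positive diagonal entries satisfying Ω = L Lᵀ (the Cholesky factor of Ω) also has its block pairing the i-th and j-th of the first n block positions equal to zero for all i ≠ j; that is, L has the form L = [[D, 0],[B, L_G]] with D block diagonal. -/
/-!
Compare the entries of `Ω = L * Lᵀ` column by column. For a triangular factor,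
`Ω x y = L x y * L y y + ∑ z < y, L x z * L y z`. If `x` and `y` lie in distinct blocks among the
first `n`, then every `z < y` also lies in one of the first `n` blocks, and that block differs from
the block of `x` or from the block of `y`. By induction on the column, one factor of each product in
the sum vanishes, so `L x y * L y y = Ω x y = 0`, and `L y y ≠ 0`. This is
`cholesky_no_fill_in`. The border block `(i, G)` of `L` vanishes by triangularity alone.
-/

open Matrix

/-- Absence of fill-in: the zero pattern `R` of a matrix `L * Lᵀ` is inherited by the lower
triangular factor `L`, provided that for `R x y` each earlier index `z < y` is related by `R` to `x`
or to `y`. -/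
theorem cholesky_no_fill_in {ι : Type*} [LinearOrder ι] [Fintype ι] (L : Matrix ι ι ℝ)
    (hLow : ∀ x y, x < y → L x y = 0) (hDiag : ∀ x, 0 < L x x) (R : ι → ι → Prop)
    (hR : ∀ x y, R x y → (L * Lᵀ) x y = 0)
    (hRz : ∀ x y z, R x y → z < y → R x z ∨ R y z) :
    ∀ y x, R x y → L x y = 0 := by
  intro y
  induction y using WellFoundedLT.induction with
  | ind y ih =>
    intro x hxy
    have h := hR x y hxy
    rw [Matrix.mul_apply, Finset.sum_eq_single y] at h
    · exact (mul_eq_zero.mp h).resolve_right (hDiag y).ne'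
    · intro z _ hzy
      rw [Matrix.transpose_apply]
      rcases lt_or_gt_of_ne hzy with hlt | hgt
      · rcases hRz x y z hxy hlt with hz | hz
        · rw [ih z hlt x hz, zero_mul]
        · rw [ih z hlt y hz, mul_zero]
      · rw [hLow y z hgt, mul_zero]
    · exact fun hy => absurd (Finset.mem_univ y) hy

/-- If a positive-definite matrix `Ω`, partitioned into blocks `(d₁, …, dₙ, m_G)`, has zero
blocks pairing the `i`-th and `j`-th of the first `n` block positions for `i ≠ j`, then its
Cholesky factor (any lower-triangular `L` with positive diagonal such that `Ω = L Lᵀ`, which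
is unique) has the same block sparsity: it has the form `[[D, 0], [B, L_G]]` with `D` block
diagonal. Here the index type carries the lexicographic order corresponding to the
partition. -/
theorem stmt2 (n mG : ℕ) (hn : 0 < n) (hmG : 0 < mG) (d : Fin n → ℕ) (hd : ∀ i, 0 < d i)
    (Ω : Matrix ((Σₗ i : Fin n, Fin (d i)) ⊕ₗ Fin mG) ((Σₗ i : Fin n, Fin (d i)) ⊕ₗ Fin mG) ℝ)
    (hΩ : Ω.PosDef)
    (hsparse : ∀ i j : Fin n, i ≠ j → ∀ (a : Fin (d i)) (b : Fin (d j)),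
      Ω (toLex (Sum.inl (toLex ⟨i, a⟩))) (toLex (Sum.inl (toLex ⟨j, b⟩))) = 0)
    (L : Matrix ((Σₗ i : Fin n, Fin (d i)) ⊕ₗ Fin mG) ((Σₗ i : Fin n, Fin (d i)) ⊕ₗ Fin mG) ℝ)
    (hLow : ∀ x y, x < y → L x y = 0)
    (hDiag : ∀ x, 0 < L x x)
    (hFact : Ω = L * Lᵀ) :
    (∀ i j : Fin n, i ≠ j → ∀ (a : Fin (d i)) (b : Fin (d j)),
      L (toLex (Sum.inl (toLex ⟨i, a⟩))) (toLex (Sum.inl (toLex ⟨j, b⟩))) = 0) ∧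
    (∀ (i : Fin n) (a : Fin (d i)) (g : Fin mG),
      L (toLex (Sum.inl (toLex ⟨i, a⟩))) (toLex (Sum.inr g)) = 0) := by
  refine ⟨fun i j hij a b => ?_, fun i a g => hLow _ _ (Sum.Lex.inl_lt_inr _ _)⟩
  refine cholesky_no_fill_in L hLow hDiag
    (fun x y => ∃ (i j : Fin n) (a : Fin (d i)) (b : Fin (d j)), i ≠ j ∧
      x = toLex (Sum.inl (toLex ⟨i, a⟩)) ∧ y = toLex (Sum.inl (toLex ⟨j, b⟩)))
    ?_ ?_ _ _ ⟨i, j, a, b, hij, rfl, rfl⟩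
  · rintro x y ⟨i, j, a, b, hij, rfl, rfl⟩
    rw [← hFact]
    exact hsparse i j hij a b
  · rintro x y z ⟨i, j, a, b, hij, rfl, rfl⟩ hz
    rcases z with ⟨k, c⟩ | g
    · by_cases hik : i = k
      · subst hik
        exact Or.inr ⟨j, i, b, c, hij.symm, rfl, rfl⟩
      · exact Or.inl ⟨i, k, a, c, hik, rfl, rfl⟩
    · exact absurd hz Sum.Lex.not_inr_lt_inl
end

section
/- With L = [[D, 0],[B, L_G]] as in the block structure below, let θ = (b₁,…,bₙ,θ_G) be a random vector on a probability space whose law is the multivariate Gaussian on ℝ^{p+m_G} with mean μ = (μ₁,…,μₙ,μ_G) and covariance matrix (L Lᵀ)⁻¹. Then for each i = 1,…,n, the conditional expectation of bᵢ given the σ-algebra generated by θ_G satisfies, almost surely, E[bᵢ | σ(θ_G)] = μᵢ − Lᵢ^{−⊤} L_{Gi}ᵀ (θ_G − μ_G). -/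
/-!
The proof is a symmetry argument. Write `θ = (b, g)`, `μ = (μ_b, μ_g)`, and choose `K` with
`Dᵀ K = Bᵀ`. Since `Lᵀ = [[Dᵀ, Bᵀ], [0, L_Gᵀ]]`, the quadratic form in the Gaussian density is
`‖Lᵀ (θ - μ)‖² = ‖Dᵀ W‖² + ‖L_Gᵀ (g - μ_g)‖²` with `W = b - μ_b + K (g - μ_g)`.
The affine reflection that fixes `g` and sends `W` to `-W` therefore preserves the density; its
linear part has determinant `±1`, so it preserves Lebesgue measure and hence the law of `θ`.
Consequently `W` integrates to zero over every event of `σ(g)`, i.e. `E[W | σ(g)] = 0`, which is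
the claim since `K (g - μ_g)` is `σ(g)`-measurable and block row `i` of `K` is `Lᵢ⁻ᵀ L_{Gi}ᵀ`.
The rest is integrability of the coordinates of `θ`, obtained from one-dimensional
Gaussian integrals by the change of variables `y = Lᵀ (x - μ)`.
-/

open MeasureTheory Matrix

noncomputable def gaussianPdf {ι : Type*} [Fintype ι] [DecidableEq ι] (m : ι → ℝ)
    (S : Matrix ι ι ℝ) (x : ι → ℝ) : ℝ :=
  (2 * Real.pi) ^ (-(Fintype.card ι : ℝ) / 2) * S.det ^ (-(1 : ℝ) / 2) *
    Real.exp (-(1 / 2) * ((x - m) ⬝ᵥ (S⁻¹ *ᵥ (x - m))))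

noncomputable def mvGaussian {ι : Type*} [Fintype ι] [DecidableEq ι] (m : ι → ℝ)
    (S : Matrix ι ι ℝ) : Measure (ι → ℝ) :=
  volume.withDensity fun x => ENNReal.ofReal (gaussianPdf m S x)

lemma gaussianPdf_inv_mul_transpose {ι : Type*} [Fintype ι] [DecidableEq ι] (m : ι → ℝ)
    (L : Matrix ι ι ℝ) (hL : IsUnit L) (x : ι → ℝ) :
    gaussianPdf m (L * Lᵀ)⁻¹ x =
      ((2 * Real.pi) ^ (-(Fintype.card ι : ℝ) / 2) * (L * Lᵀ)⁻¹.det ^ (-(1 : ℝ) / 2)) *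
      Real.exp (-(1 / 2) * ((Lᵀ *ᵥ (x - m)) ⬝ᵥ (Lᵀ *ᵥ (x - m)))) := by
  have hdet : IsUnit (L * Lᵀ).det := by
    have := (Matrix.isUnit_iff_isUnit_det L).1 hL
    rw [det_mul, det_transpose]
    exact this.mul this
  unfold gaussianPdf
  rw [Matrix.nonsing_inv_nonsing_inv _ hdet, ← Matrix.mulVec_mulVec, Matrix.dotProduct_mulVec,
    ← Matrix.mulVec_transpose]

lemma continuous_gaussianPdf {ι : Type*} [Fintype ι] [DecidableEq ι] (m : ι → ℝ)
    (S : Matrix ι ι ℝ) : Continuous (gaussianPdf m S) := by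
  unfold gaussianPdf
  refine continuous_const.mul (Real.continuous_exp.comp (continuous_const.mul ?_))
  have h1 : Continuous fun x : ι → ℝ => x - m := by fun_prop
  exact h1.dotProduct (continuous_const.matrix_mulVec h1)

lemma integrable_coord_mul_exp {ι : Type*} [Fintype ι] (j : ι) :
    Integrable (fun y : ι → ℝ => y j * Real.exp (-(1 / 2) * (y ⬝ᵥ y))) := by
  classical
  have h : Integrable (fun y : ι → ℝ =>
      ∏ i, ((if i = j then y i else 1) * Real.exp (-(1 / 2) * y i ^ 2))) := by
    refine Integrable.fintype_prod
      (f := fun i t => (if i = j then t else 1) * Real.exp (-(1 / 2) * t ^ 2)) ?_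
    intro i
    by_cases hij : i = j
    · simpa [hij] using integrable_mul_exp_neg_mul_sq (b := 1 / 2) (by norm_num)
    · simpa [hij] using integrable_exp_neg_mul_sq (b := 1 / 2) (by norm_num)
  refine h.congr (Filter.Eventually.of_forall fun y => ?_)
  simp only [Finset.prod_mul_distrib, Finset.prod_ite_eq', Finset.mem_univ, if_true,
    ← Real.exp_sum, ← Finset.mul_sum, dotProduct, sq]

lemma integrable_comp_mulVec {ι : Type*} [Fintype ι] [DecidableEq ι] (M : Matrix ι ι ℝ)
    (hM : M.det ≠ 0) {f : (ι → ℝ) → ℝ} (hf : Integrable f) :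
    Integrable (fun x => f (M *ᵥ x)) := by
  have h : Integrable f (Measure.map (toLin' M) volume) := by
    rw [Real.map_matrix_volume_pi_eq_smul_volume_pi hM]
    exact hf.smul_measure ENNReal.ofReal_ne_top
  exact h.comp_measurable (by fun_prop)

/-- The substitution `y = Lᵀ (x - m)` makes the density a product of one-dimensional Gaussians, so
each `y j` is integrable, and `x - m = L⁻ᵀ y` is a linear image of `y`. -/
lemma integrable_sub_mvGaussian {ι : Type*} [Fintype ι] [DecidableEq ι] (m : ι → ℝ)
    (L : Matrix ι ι ℝ) (hL : IsUnit L) (k : ι) :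
    Integrable (fun x => x k - m k) (mvGaussian m (L * Lᵀ)⁻¹) := by
  have hdet : IsUnit Lᵀ.det := by
    rw [det_transpose]; exact (Matrix.isUnit_iff_isUnit_det L).1 hL
  have hcoord : ∀ j, Integrable (fun x => (Lᵀ *ᵥ (x - m)) j) (mvGaussian m (L * Lᵀ)⁻¹) := by
    intro j
    unfold mvGaussian
    have hmeas : Measurable fun x => ENNReal.ofReal (gaussianPdf m (L * Lᵀ)⁻¹ x) :=
      (continuous_gaussianPdf m _).measurable.ennreal_ofReal
    rw [integrable_withDensity_iff hmeas (by simp)]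
    have h := (integrable_comp_mulVec Lᵀ hdet.ne_zero (integrable_coord_mul_exp j)).comp_sub_right m
    refine (h.const_mul (max 0 ((2 * Real.pi) ^ (-(Fintype.card ι : ℝ) / 2) *
      (L * Lᵀ)⁻¹.det ^ (-(1 : ℝ) / 2)))).congr (Filter.Eventually.of_forall fun x => ?_)
    simp only
    -- `ofReal` truncates at zero, and the positive exponential factors out of the truncation.
    rw [ENNReal.toReal_ofReal', gaussianPdf_inv_mul_transpose m L hL,
      max_comm _ (0 : ℝ)]
    conv_rhs => rw [← zero_mul (Real.exp (-(1 / 2) * ((Lᵀ *ᵥ (x - m)) ⬝ᵥ (Lᵀ *ᵥ (x - m)))))]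
    rw [← max_mul_of_nonneg _ _ (Real.exp_pos _).le]
    ring
  have h : Integrable (fun x => ∑ j, (Lᵀ)⁻¹ k j * (Lᵀ *ᵥ (x - m)) j)
      (mvGaussian m (L * Lᵀ)⁻¹) :=
    integrable_finsetSum _ fun j _ => (hcoord j).const_mul _
  refine h.congr (Filter.Eventually.of_forall fun x => ?_)
  change ((Lᵀ)⁻¹ *ᵥ (Lᵀ *ᵥ (x - m))) k = _
  rw [Matrix.mulVec_mulVec, Matrix.nonsing_inv_mul _ hdet, Matrix.one_mulVec]
  rfl

/-- If `N` has determinant `±1` and preserves the quadratic form of `L Lᵀ`, the affine map `x ↦ m + N (x - m)` preserves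
the Gaussian measure. -/
lemma map_mvGaussian_of_isometry {ι : Type*} [Fintype ι] [DecidableEq ι] (m : ι → ℝ)
    (L N : Matrix ι ι ℝ) (hL : IsUnit L) (hN : |N.det| = 1)
    (hNL : ∀ v, (Lᵀ *ᵥ (N *ᵥ v)) ⬝ᵥ (Lᵀ *ᵥ (N *ᵥ v)) = (Lᵀ *ᵥ v) ⬝ᵥ (Lᵀ *ᵥ v)) :
    (mvGaussian m (L * Lᵀ)⁻¹).map (fun x => m + N *ᵥ (x - m)) = mvGaussian m (L * Lᵀ)⁻¹ := by
  have hlin : MeasurePreserving (fun x : ι → ℝ => N *ᵥ x) volume volume := by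
    refine ⟨by fun_prop, ?_⟩
    have h0 : N.det ≠ 0 := fun h => by simp [h] at hN
    have h := Real.map_matrix_volume_pi_eq_smul_volume_pi h0
    rw [abs_inv, hN, inv_one, ENNReal.ofReal_one, one_smul] at h
    exact h
  have hR : MeasurePreserving (fun x : ι → ℝ => m + N *ᵥ (x - m)) volume volume :=
    (measurePreserving_add_left volume m).comp
      (hlin.comp (measurePreserving_sub_right volume m))
  have hmeas : Measurable fun x => ENNReal.ofReal (gaussianPdf m (L * Lᵀ)⁻¹ x) :=
    (continuous_gaussianPdf m _).measurable.ennreal_ofReal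
  ext s hs
  rw [Measure.map_apply hR.measurable hs]
  unfold mvGaussian
  rw [withDensity_apply _ hs, withDensity_apply _ (hR.measurable hs),
    ← hR.setLIntegral_comp_preimage hs hmeas]
  refine lintegral_congr fun x => ?_
  rw [gaussianPdf_inv_mul_transpose m L hL, gaussianPdf_inv_mul_transpose m L hL,
    add_sub_cancel_left, hNL]

/-- A function that is odd under a symmetry of the law has zero integral over every event that is
invariant under the symmetry. -/
lemma setIntegral_eq_zero_of_odd {Ω E : Type*} [MeasurableSpace Ω] [MeasurableSpace E]
    {P : Measure Ω} {θ : Ω → E} (hθ : Measurable θ) {R : E → E} (hR : Measurable R)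
    (hmap : (P.map θ).map R = P.map θ) {W : E → ℝ} (hW : Measurable W)
    (hodd : ∀ x, W (R x) = -W x) {A : Set E} (hA : MeasurableSet A) (hRA : R ⁻¹' A = A) :
    ∫ ω in θ ⁻¹' A, W (θ ω) ∂P = 0 := by
  rw [← setIntegral_map hA hW.aestronglyMeasurable hθ.aemeasurable]
  have h : ∫ x in A, W x ∂(P.map θ) = -∫ x in A, W x ∂(P.map θ) := by
    conv_lhs => rw [← hmap]
    rw [setIntegral_map hA hW.aestronglyMeasurable hR.aemeasurable, hRA]
    simp only [hodd, integral_neg]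
  linarith

/-- The conditional mean of the first block for a two-block lower-triangular factor `[[D, 0], [B, G]]`, with the
regression matrix `K` characterised by `Dᵀ K = Bᵀ`. -/
lemma condExp_two_block {κ γ : Type*} [Fintype κ] [DecidableEq κ] [Fintype γ] [DecidableEq γ]
    (D : Matrix κ κ ℝ) (B : Matrix γ κ ℝ) (G : Matrix γ γ ℝ) (K : Matrix κ γ ℝ)
    (hK : Dᵀ * K = Bᵀ) (hL : IsUnit (Matrix.fromBlocks D 0 B G))
    {Ω : Type*} [MeasurableSpace Ω] (P : Measure Ω) [IsProbabilityMeasure P]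
    (μ : κ ⊕ γ → ℝ) (θ : Ω → κ ⊕ γ → ℝ) (hθ : Measurable θ)
    (hlaw : P.map θ =
      mvGaussian μ (Matrix.fromBlocks D 0 B G * (Matrix.fromBlocks D 0 B G)ᵀ)⁻¹) (k : κ) :
    P[(fun ω => θ ω (Sum.inl k)) |
        MeasurableSpace.comap (fun ω (g : γ) => θ ω (Sum.inr g)) inferInstance]
      =ᵐ[P] fun ω => μ (Sum.inl k) -
        (K *ᵥ (fun g : γ => θ ω (Sum.inr g) - μ (Sum.inr g))) k := by
  set L := Matrix.fromBlocks D 0 B G with hLdef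
  -- Linear part of the reflection `(b, g) ↦ (-b - 2 K g, g)`.
  let N : Matrix (κ ⊕ γ) (κ ⊕ γ) ℝ := Matrix.fromBlocks (-1) (-(2 : ℝ) • K) 0 1
  have hNdet : |N.det| = 1 := by
    simp [N, Matrix.det_neg]
  have hLN : Lᵀ * N = Matrix.fromBlocks (-1) 0 0 1 * Lᵀ := by
    simp only [N, hLdef, Matrix.fromBlocks_transpose, Matrix.fromBlocks_multiply]
    congr 1
    · simp
    · rw [Matrix.mul_smul, hK]
      simp only [Matrix.mul_one, Matrix.neg_mul, Matrix.one_mul, Matrix.zero_mul, add_zero]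
      module
    · simp
    · simp
  have hNL : ∀ v, (Lᵀ *ᵥ (N *ᵥ v)) ⬝ᵥ (Lᵀ *ᵥ (N *ᵥ v)) = (Lᵀ *ᵥ v) ⬝ᵥ (Lᵀ *ᵥ v) := by
    intro v
    rw [Matrix.mulVec_mulVec, hLN, ← Matrix.mulVec_mulVec, Matrix.fromBlocks_mulVec]
    generalize Lᵀ *ᵥ v = w
    simp [Matrix.neg_mulVec, dotProduct]
  have hmap := map_mvGaussian_of_isometry μ L N hL hNdet hNL
  rw [← hlaw] at hmap
  let R : (κ ⊕ γ → ℝ) → κ ⊕ γ → ℝ := fun x => μ + N *ᵥ (x - μ)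
  have hRm : Measurable R := by
    have : Continuous R := by fun_prop
    exact this.measurable
  have hRr : ∀ x g, R x (Sum.inr g) = x (Sum.inr g) := by
    intro x g
    simp [R, N, Matrix.fromBlocks_mulVec]
  have hRl : ∀ x, R x (Sum.inl k) = 2 * μ (Sum.inl k) - x (Sum.inl k) -
      2 * (K *ᵥ fun g => x (Sum.inr g) - μ (Sum.inr g)) k := by
    intro x
    have : (x - μ) ∘ Sum.inr = fun g => x (Sum.inr g) - μ (Sum.inr g) := rfl
    simp only [R, N, Matrix.fromBlocks_mulVec, Pi.add_apply, Sum.elim_inl, this,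
      Matrix.neg_mulVec, Matrix.one_mulVec, Matrix.smul_mulVec, Pi.smul_apply, Pi.neg_apply,
      Function.comp_apply, Pi.sub_apply, smul_eq_mul]
    ring
  -- `W ∘ θ` is the claimed conditional mean minus `b k`.
  let W : (κ ⊕ γ → ℝ) → ℝ := fun x => μ (Sum.inl k) -
    (K *ᵥ fun g => x (Sum.inr g) - μ (Sum.inr g)) k - x (Sum.inl k)
  have hWm : Measurable W := by
    have : Continuous W := by
      simp only [W, Matrix.mulVec, dotProduct]; fun_prop
    exact this.measurable
  have hodd : ∀ x, W (R x) = -W x := by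
    intro x
    simp only [W, hRr, hRl]
    ring
  have hcoord : ∀ j, Integrable (fun ω => θ ω j - μ j) P := by
    intro j
    have h := integrable_sub_mvGaussian μ L hL j
    rw [← hlaw] at h
    exact h.comp_measurable hθ
  have hb : Integrable (fun ω => θ ω (Sum.inl k)) P := by
    refine ((hcoord (Sum.inl k)).add (integrable_const (μ (Sum.inl k)))).congr
      (Filter.Eventually.of_forall fun ω => ?_)
    simp
  have hg : Integrable (fun ω => μ (Sum.inl k) -
      (K *ᵥ (fun g : γ => θ ω (Sum.inr g) - μ (Sum.inr g))) k) P := by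
    refine (integrable_const _).sub ?_
    exact integrable_finsetSum _ fun g _ => (hcoord (Sum.inr g)).const_mul _
  have hθr : Measurable fun ω (g : γ) => θ ω (Sum.inr g) := by fun_prop
  symm
  refine ae_eq_condExp_of_forall_setIntegral_eq hθr.comap_le hb
    (fun s _ _ => hg.integrableOn) ?_ ?_
  · rintro _ ⟨A, hA, rfl⟩ -
    rw [← sub_eq_zero, ← integral_sub hg.integrableOn hb.integrableOn]
    have hrm : Measurable fun (x : κ ⊕ γ → ℝ) (g : γ) => x (Sum.inr g) := by fun_prop
    refine setIntegral_eq_zero_of_odd hθ hRm hmap hWm hodd (hrm hA) ?_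
    ext x
    simp only [Set.mem_preimage, hRr]
  · refine StronglyMeasurable.aestronglyMeasurable (Measurable.stronglyMeasurable ?_)
    have hφ : Measurable fun y : γ → ℝ =>
        μ (Sum.inl k) - (K *ᵥ fun g => y g - μ (Sum.inr g)) k := by
      simp only [Matrix.mulVec, dotProduct]; fun_prop
    exact hφ.comp (comap_measurable fun ω (g : γ) => θ ω (Sum.inr g))

/-- With `L = [[D, 0], [B, L_G]]`, if `θ = (b₁, …, bₙ, θ_G)` is Gaussian with mean `μ` and
covariance `(L Lᵀ)⁻¹`, then (componentwise, almost surely)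
`E[bᵢ | σ(θ_G)] = μᵢ - Lᵢ⁻ᵀ L_{Gi}ᵀ (θ_G - μ_G)`. -/
theorem stmt5 (n mG : ℕ) (hn : 0 < n) (hmG : 0 < mG) (d : Fin n → ℕ) (hd : ∀ i, 0 < d i)
    (Li : ∀ i : Fin n, Matrix (Fin (d i)) (Fin (d i)) ℝ)
    (hLiLow : ∀ i, ∀ a b : Fin (d i), a < b → Li i a b = 0)
    (hLiInv : ∀ i, IsUnit (Li i))
    (LG : Matrix (Fin mG) (Fin mG) ℝ)
    (hLGLow : ∀ a b : Fin mG, a < b → LG a b = 0)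
    (hLGInv : IsUnit LG)
    (LGi : ∀ i : Fin n, Matrix (Fin mG) (Fin (d i)) ℝ)
    (D : Matrix ((i : Fin n) × Fin (d i)) ((i : Fin n) × Fin (d i)) ℝ)
    (hD : D = Matrix.blockDiagonal' Li)
    (B : Matrix (Fin mG) ((i : Fin n) × Fin (d i)) ℝ)
    (hB : B = Matrix.of fun g x => LGi x.1 g x.2)
    (L : Matrix (((i : Fin n) × Fin (d i)) ⊕ Fin mG) (((i : Fin n) × Fin (d i)) ⊕ Fin mG) ℝ)
    (hL : L = Matrix.fromBlocks D 0 B LG)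
    {Ω : Type*} [MeasurableSpace Ω] (P : Measure Ω) [IsProbabilityMeasure P]
    (μ : (((i : Fin n) × Fin (d i)) ⊕ Fin mG) → ℝ)
    (θ : Ω → (((i : Fin n) × Fin (d i)) ⊕ Fin mG) → ℝ) (hθ : Measurable θ)
    (hlaw : P.map θ = mvGaussian μ (L * Lᵀ)⁻¹) :
    ∀ (i : Fin n) (a : Fin (d i)),
      P[(fun ω => θ ω (Sum.inl ⟨i, a⟩)) |
          MeasurableSpace.comap (fun ω (g : Fin mG) => θ ω (Sum.inr g)) inferInstance]
        =ᵐ[P] fun ω => μ (Sum.inl ⟨i, a⟩) -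
          (((Li i)ᵀ)⁻¹ *ᵥ ((LGi i)ᵀ *ᵥ
            (fun g : Fin mG => θ ω (Sum.inr g) - μ (Sum.inr g)))) a := by
  intro i a
  subst hL
  have hdetD : ∀ j, IsUnit (Li j)ᵀ.det := fun j => by
    rw [det_transpose]; exact (Matrix.isUnit_iff_isUnit_det _).1 (hLiInv j)
  have hDinv : D * Matrix.blockDiagonal' (fun j => (Li j)⁻¹) = 1 := by
    rw [hD, ← Matrix.blockDiagonal'_mul]
    have : (fun j => Li j * (Li j)⁻¹) = fun j => (1 : Matrix (Fin (d j)) (Fin (d j)) ℝ) :=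
      funext fun j => Matrix.mul_nonsing_inv _ ((Matrix.isUnit_iff_isUnit_det _).1 (hLiInv j))
    rw [this]
    exact Matrix.blockDiagonal'_one
  have hLu : IsUnit (Matrix.fromBlocks D 0 B LG) := by
    rw [Matrix.isUnit_iff_isUnit_det, Matrix.det_fromBlocks_zero₁₂]
    exact (Matrix.isUnit_det_of_right_inverse hDinv).mul
      ((Matrix.isUnit_iff_isUnit_det _).1 hLGInv)
  let K : Matrix ((i : Fin n) × Fin (d i)) (Fin mG) ℝ :=
    Matrix.of fun x g => (((Li x.1)ᵀ)⁻¹ * (LGi x.1)ᵀ) x.2 g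
  have hK : Dᵀ * K = Bᵀ := by
    ext ⟨j, b⟩ g
    have h : ((Li j)ᵀ * (((Li j)ᵀ)⁻¹ * (LGi j)ᵀ)) b g = (LGi j)ᵀ b g := by
      rw [Matrix.mul_nonsing_inv_cancel_left _ _ (hdetD j)]
    rw [hD, hB, Matrix.blockDiagonal'_transpose, Matrix.mul_apply, Fintype.sum_sigma,
      Finset.sum_eq_single j]
    · simpa [K, Matrix.mul_apply, Matrix.blockDiagonal'_apply] using h
    · intro j' _ hj
      refine Finset.sum_eq_zero fun c _ => ?_
      rw [Matrix.blockDiagonal'_apply_ne _ _ _ hj.symm, zero_mul]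
    · simp
  refine (condExp_two_block D B LG K hK hLu P μ θ hθ hlaw ⟨i, a⟩).trans
    (Filter.Eventually.of_forall fun ω => ?_)
  simp only [Matrix.mulVec_mulVec]
  rfl
end

section
/- For k = 1,…,K let L_k = [[D_k, 0],[B_k, L_{kG}]] be matrices of the block structure below with blocks L_{ki}, L_{kGi}, L_{kG}, let μ_k = (μ_{k1},…,μ_{kn},μ_{kG}) ∈ ℝ^{p+m_G}, and let π₁,…,π_K > 0 with Σ_k π_k = 1. For θ_G ∈ ℝ^{m_G}, let m(θ_G) := Σ_{k=1}^{K} π_k N(θ_G; μ_{kG}, (L_{kG} L_{kG}ᵀ)⁻¹) and, when m(θ_G) > 0, let w_k(θ_G) := π_k N(θ_G; μ_{kG}, (L_{kG} L_{kG}ᵀ)⁻¹) / m(θ_G). Then for every θ_G with m(θ_G) > 0 and every b₁,…,bₙ: Σ_{k=1}^{K} π_k N((b₁,…,bₙ,θ_G); μ_k, (L_k L_kᵀ)⁻¹) = m(θ_G) · Σ_{k=1}^{K} w_k(θ_G) ∏_{i=1}^{n} N(bᵢ; μ_{ki} − L_{ki}^{−⊤} L_{kGi}ᵀ (θ_G −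 μ_{kG}), (L_{ki} L_{ki}ᵀ)⁻¹). -/
/-!
With precision `L * Lᵀ`, a Gaussian density is `(2π)^(-d/2) |det L| exp(-|Lᵀ (x - m)|² / 2)`
(`gaussianPdf_cholesky`). For the block lower-triangular `L`, the `θ_G`-block of `Lᵀ (x - μ)` is
`L_Gᵀ (θ_G - μ_G)`, and the `i`-th block is
`Lᵢᵀ (bᵢ - μᵢ) + L_{Gi}ᵀ (θ_G - μ_G) = Lᵢᵀ (bᵢ - (μᵢ - Lᵢ^{-⊤} L_{Gi}ᵀ (θ_G - μ_G)))`.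
The squared length is the sum over the blocks and `det L` is the product of the diagonal blocks'
determinants, so each joint component density factors into the marginal density at `θ_G` times the
product of the conditional densities (`gaussianPdf_block`). The mixture identity follows by summing
over components, since `m θ_G * w_k θ_G` is the `k`-th weighted marginal density.
-/

open Matrix

/-- With precision `L * Lᵀ` the determinant factor is `|det L|` and the quadratic form is the squared
length of `Lᵀ (x - m)`. -/
lemma gaussianPdf_cholesky {ι : Type*} [Fintype ι] [DecidableEq ι] (m x : ι → ℝ)
    (L : Matrix ι ι ℝ) (hL : IsUnit L) :
    gaussianPdf m (L * Lᵀ)⁻¹ x = (2 * Real.pi) ^ (-(Fintype.card ι : ℝ) / 2) * |L.det| *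
      Real.exp (-(1 / 2) * ((Lᵀ *ᵥ (x - m)) ⬝ᵥ (Lᵀ *ᵥ (x - m)))) := by
  have hdet : L.det ≠ 0 := ((Matrix.isUnit_iff_isUnit_det L).1 hL).ne_zero
  have hLL : IsUnit (L * Lᵀ).det := by
    rw [det_mul, det_transpose]
    exact (mul_ne_zero hdet hdet).isUnit
  have hd : (L * Lᵀ)⁻¹.det ^ (-(1 : ℝ) / 2) = |L.det| := by
    rw [det_nonsing_inv, Ring.inverse_eq_inv', det_mul, det_transpose, ← abs_mul_abs_self,
      ← pow_two, Real.inv_rpow (by positivity), ← Real.rpow_natCast,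
      ← Real.rpow_mul (abs_nonneg _), ← Real.rpow_neg (abs_nonneg _)]
    norm_num
  unfold gaussianPdf
  rw [hd, nonsing_inv_nonsing_inv _ hLL, ← mulVec_mulVec, dotProduct_mulVec, ← mulVec_transpose]

lemma det_blockDiag {n : ℕ} (d : Fin n → ℕ)
    (Li : ∀ i : Fin n, Matrix (Fin (d i)) (Fin (d i)) ℝ) :
    (blockDiagonal' Li).det = ∏ i, (Li i).det := by
  rw [(blockTriangular_blockDiagonal' Li).det_fintype]
  refine Finset.prod_congr rfl fun i _ => ?_
  let e : Fin (d i) ≃ {x : (i : Fin n) × Fin (d i) // x.1 = i} :=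
    (Equiv.sigmaSubtype (β := fun i => Fin (d i)) i).symm
  rw [← det_submatrix_equiv_self e]
  congr 1
  ext a b
  simp [e, toSquareBlock, toSquareBlockProp, Equiv.sigmaSubtype]

/-- Factorization of a single component: the joint density is the marginal density at `θ` times
the product of the conditional densities of the blocks `b i`. -/
lemma gaussianPdf_block {n mG : ℕ} (d : Fin n → ℕ)
    (Li : ∀ i : Fin n, Matrix (Fin (d i)) (Fin (d i)) ℝ) (hLi : ∀ i, IsUnit (Li i))
    (LG : Matrix (Fin mG) (Fin mG) ℝ) (hLG : IsUnit LG)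
    (LGi : ∀ i : Fin n, Matrix (Fin mG) (Fin (d i)) ℝ)
    (μ : (((i : Fin n) × Fin (d i)) ⊕ Fin mG) → ℝ) (θ : Fin mG → ℝ)
    (b : (i : Fin n) → Fin (d i) → ℝ)
    (L : Matrix (((i : Fin n) × Fin (d i)) ⊕ Fin mG) (((i : Fin n) × Fin (d i)) ⊕ Fin mG) ℝ)
    (hL : L = fromBlocks (blockDiagonal' Li) 0 (of fun g x => LGi x.1 g x.2) LG) :
    gaussianPdf μ (L * Lᵀ)⁻¹ (Sum.elim (fun x : (i : Fin n) × Fin (d i) => b x.1 x.2) θ) =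
      gaussianPdf (fun g => μ (Sum.inr g)) (LG * LGᵀ)⁻¹ θ *
        ∏ i, gaussianPdf ((fun a => μ (Sum.inl ⟨i, a⟩)) -
          ((Li i)ᵀ)⁻¹ *ᵥ ((LGi i)ᵀ *ᵥ (θ - fun g => μ (Sum.inr g))))
          (Li i * (Li i)ᵀ)⁻¹ (b i) := by
  have hdet : L.det = (∏ i, (Li i).det) * LG.det := by
    rw [hL, det_fromBlocks_zero₁₂, det_blockDiag]
  have hLu : IsUnit L := by
    rw [isUnit_iff_isUnit_det, hdet, isUnit_iff_ne_zero]
    exact mul_ne_zero (Finset.prod_ne_zero_iff.2 fun i _ =>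
      ((isUnit_iff_isUnit_det _).1 (hLi i)).ne_zero)
      ((isUnit_iff_isUnit_det _).1 hLG).ne_zero
  -- The `i`-th block of `Lᵀ (x - μ)` is `Lᵢᵀ` applied to `bᵢ` minus its conditional mean.
  have hvec : Lᵀ *ᵥ (Sum.elim (fun x : (i : Fin n) × Fin (d i) => b x.1 x.2) θ - μ) =
      Sum.elim (fun x : (i : Fin n) × Fin (d i) => ((Li x.1)ᵀ *ᵥ (b x.1 -
        ((fun a => μ (Sum.inl ⟨x.1, a⟩)) -
          ((Li x.1)ᵀ)⁻¹ *ᵥ ((LGi x.1)ᵀ *ᵥ (θ - fun g => μ (Sum.inr g)))))) x.2)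
        (LGᵀ *ᵥ (θ - fun g => μ (Sum.inr g))) := by
    have hu : ∀ i, IsUnit ((Li i)ᵀ).det := fun i => by
      rw [det_transpose]; exact (isUnit_iff_isUnit_det _).1 (hLi i)
    ext (⟨i, a⟩ | g)
    · have h1 : (Li i)ᵀ *ᵥ (b i - ((fun a => μ (Sum.inl ⟨i, a⟩)) -
          ((Li i)ᵀ)⁻¹ *ᵥ ((LGi i)ᵀ *ᵥ (θ - fun g => μ (Sum.inr g))))) =
          (Li i)ᵀ *ᵥ (b i - fun a => μ (Sum.inl ⟨i, a⟩)) +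
            (LGi i)ᵀ *ᵥ (θ - fun g => μ (Sum.inr g)) := by
        rw [← sub_add, mulVec_add, mulVec_mulVec _ (Li i)ᵀ, mul_nonsing_inv _ (hu i), one_mulVec]
      simp only [Sum.elim_inl]
      rw [h1, hL, fromBlocks_transpose, blockDiagonal'_transpose]
      simp only [mulVec, dotProduct, Fintype.sum_sum_type, Fintype.sum_sigma, Pi.add_apply,
        fromBlocks_apply₁₁, fromBlocks_apply₁₂, Pi.sub_apply, Sum.elim_inl, Sum.elim_inr,
        transpose_apply, of_apply]
      congr 1
      rw [Finset.sum_eq_single i]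
      · simp [blockDiagonal'_apply_eq]
      · intro j _ hj
        exact Finset.sum_eq_zero fun c _ => by
          rw [blockDiagonal'_apply_ne _ _ _ hj.symm, zero_mul]
      · simp
    · simp [hL, mulVec, dotProduct, Fintype.sum_sum_type]
  rw [gaussianPdf_cholesky _ _ L hLu, hvec, gaussianPdf_cholesky _ _ LG hLG,
    Finset.prod_congr rfl fun i _ => gaussianPdf_cholesky _ _ (Li i) (hLi i),
    Finset.prod_mul_distrib, Finset.prod_mul_distrib, hdet, abs_mul, Finset.abs_prod,
    ← Real.exp_sum, ← Finset.mul_sum, ← Real.rpow_sum_of_pos Real.two_pi_pos]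
  have hcard : (2 * Real.pi) ^
      (-(Fintype.card (((i : Fin n) × Fin (d i)) ⊕ Fin mG) : ℝ) / 2) =
      (2 * Real.pi) ^ (-(Fintype.card (Fin mG) : ℝ) / 2) *
      (2 * Real.pi) ^ (∑ i, -(Fintype.card (Fin (d i)) : ℝ) / 2) := by
    rw [← Real.rpow_add Real.two_pi_pos, ← Finset.sum_div, Finset.sum_neg_distrib]
    congr 1
    simp only [Fintype.card_sum, Fintype.card_sigma]
    push_cast
    ring
  rw [hcard, sumElim_dotProduct_sumElim, mul_add, Real.exp_add]
  simp only [dotProduct, Fintype.sum_sigma]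
  ring

/-- For a Gaussian mixture with block-structured precision Cholesky factors, the joint mixture
density at `(b₁, …, bₙ, θ_G)` equals the marginal mixture density `m(θ_G)` times the mixture,
with weights `w_k(θ_G)`, of the products of conditional densities of the `bᵢ` given `θ_G`. -/
theorem stmt9 (n mG : ℕ) (hn : 0 < n) (hmG : 0 < mG) (d : Fin n → ℕ) (hd : ∀ i, 0 < d i)
    (K : ℕ) (hK : 0 < K)
    (π' : Fin K → ℝ) (hπpos : ∀ k, 0 < π' k) (hπsum : ∑ k, π' k = 1)
    (Li : ∀ (k : Fin K) (i : Fin n), Matrix (Fin (d i)) (Fin (d i)) ℝ)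
    (hLiLow : ∀ k i, ∀ a b : Fin (d i), a < b → Li k i a b = 0)
    (hLiInv : ∀ k i, IsUnit (Li k i))
    (LG : Fin K → Matrix (Fin mG) (Fin mG) ℝ)
    (hLGLow : ∀ k, ∀ a b : Fin mG, a < b → LG k a b = 0)
    (hLGInv : ∀ k, IsUnit (LG k))
    (LGi : ∀ (k : Fin K) (i : Fin n), Matrix (Fin mG) (Fin (d i)) ℝ)
    (L : Fin K →
      Matrix (((i : Fin n) × Fin (d i)) ⊕ Fin mG) (((i : Fin n) × Fin (d i)) ⊕ Fin mG) ℝ)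
    (hL : ∀ k, L k = Matrix.fromBlocks (Matrix.blockDiagonal' (Li k)) 0
      (Matrix.of fun g x => LGi k x.1 g x.2) (LG k))
    (μ : Fin K → (((i : Fin n) × Fin (d i)) ⊕ Fin mG) → ℝ)
    (m : (Fin mG → ℝ) → ℝ)
    (hm : m = fun θG => ∑ k, π' k *
      gaussianPdf (fun g => μ k (Sum.inr g)) (LG k * (LG k)ᵀ)⁻¹ θG)
    (w : Fin K → (Fin mG → ℝ) → ℝ)
    (hw : ∀ k θG, 0 < m θG → w k θG = π' k *
      gaussianPdf (fun g => μ k (Sum.inr g)) (LG k * (LG k)ᵀ)⁻¹ θG / m θG) :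
    ∀ θG : Fin mG → ℝ, 0 < m θG → ∀ b : (i : Fin n) → Fin (d i) → ℝ,
      ∑ k, π' k * gaussianPdf (μ k) (L k * (L k)ᵀ)⁻¹
          (Sum.elim (fun x : (i : Fin n) × Fin (d i) => b x.1 x.2) θG) =
        m θG * ∑ k, w k θG *
          ∏ i : Fin n,
            gaussianPdf
              ((fun a => μ k (Sum.inl ⟨i, a⟩)) -
                ((Li k i)ᵀ)⁻¹ *ᵥ ((LGi k i)ᵀ *ᵥ
                  (θG - fun g => μ k (Sum.inr g))))
              (Li k i * (Li k i)ᵀ)⁻¹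
              (b i) := by
  intro θG hpos b
  rw [Finset.mul_sum]
  refine Finset.sum_congr rfl fun k _ => ?_
  rw [gaussianPdf_block d (Li k) (hLiInv k) (LG k) (hLGInv k) (LGi k) (μ k) θG b (L k) (hL k),
    hw k θG hpos, ← mul_assoc, ← mul_assoc, mul_div_cancel₀ _ hpos.ne']
end

section
/- In the setting of the previous type II local boosting construction—where π ∈ (0,1), π'_k = π_k for k < K, π'_K = π·π_K, π'_{K+1} = (1−π)·π_K, (μ'_k, L'_k) = (μ_k, L_k) for k ≤ K, μ'_{K+1,G} = μ_{K,G}, L'_{K+1,G} = L_{K,G}—assume in addition that for some subset I ⊆ {1,…,n} and every i ∉ I one has μ'_{K+1,i} = μ_{K,i}, L'_{K+1,i} = L_{K,i} and L'_{K+1,Gi} = L_{K,Gi}. Let m(θ_G) = Σ_{k=1}^{K} π_k N(θ_G; μ_{kG}, (L_{kG}L_{kG}ᵀ)⁻¹), and for m(θ_G) > 0 let w_k(θ_G) = π_k N(θ_G; μ_{kG}, (L_{kG}L_{kG}ᵀ)⁻¹)/m(θ_G) and w'_k(θ_G) = π'_k N(θ_G; μ'_{kG}, (L'_{kG}L'_{kG}ᵀ)⁻¹)/Σ_{k'}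 π'_{k'} N(θ_G; μ'_{k'G}, (L'_{k'G}L'_{k'G}ᵀ)⁻¹). Then for every i ∉ I, every θ_G with m(θ_G) > 0, and every bᵢ ∈ ℝ^{dᵢ}: Σ_{k=1}^{K+1} w'_k(θ_G) N(bᵢ; μ'_{ki} − L'⁻ᵀ_{ki} L'_{kGi}ᵀ(θ_G − μ'_{kG}), (L'_{ki} L'_{ki}ᵀ)⁻¹) = Σ_{k=1}^{K} w_k(θ_G) N(bᵢ; μ_{ki} − L_{ki}^{−⊤} L_{kGi}ᵀ(θ_G − μ_{kG}), (L_{ki} L_{ki}ᵀ)⁻¹). -/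
/-!
Splitting component `K` of the mixture into two copies with weights `π₀ π_K` and `(1 - π₀) π_K`
does not change any sum `∑ k, π_k f_k`, as long as the value `f_{K+1}` attached to the new copy
equals `f_K` (`sum_split_last`). The blocks entering the `θ_G`-marginal, and for `i ∉ I` those
entering the conditional density of `bᵢ`, are shared by the two copies. Hence the claim follows by
applying this invariance twice: with `f` the marginal density, for the normalising constant
`m(θ_G)`, and with `f` the product of marginal and conditional density, for the numerator.
-/

open Matrix

/-- A weighted sum is unchanged when the weight of one index `l` is split between `l` and a new
last index carrying the same value. -/
theorem sum_split_last {K : ℕ} (l : Fin K) (p f : Fin K → ℝ) (q F : Fin (K + 1) → ℝ) (t : ℝ)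
    (h1 : ∀ k, k ≠ l → q k.castSucc = p k) (h2 : q l.castSucc = t * p l)
    (h3 : q (Fin.last K) = (1 - t) * p l)
    (hF : ∀ k : Fin K, F k.castSucc = f k) (hF' : F (Fin.last K) = f l) :
    ∑ k, q k * F k = ∑ k, p k * f k := by
  rw [Fin.sum_univ_castSucc, Fintype.sum_eq_add_sum_compl l,
    Fintype.sum_eq_add_sum_compl l (fun k => p k * f k)]
  have : ∑ k ∈ {l}ᶜ, q k.castSucc * F k.castSucc = ∑ k ∈ {l}ᶜ, p k * f k := by
    refine Finset.sum_congr rfl fun k hk => ?_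
    rw [h1 k (by simpa using hk), hF]
  rw [this, hF, hF', h2, h3]
  ring

/-- Type II local boosting: after splitting component `K` with the new component sharing the
global blocks of component `K` and, for every `i ∉ I`, also sharing the blocks `μ_{K,i}`,
`L_{K,i}`, `L_{K,Gi}`, the mixture of conditional densities of `bᵢ` given `θ_G` is unchanged
for every `i ∉ I`. -/
theorem stmt11 (n mG : ℕ) (hn : 0 < n) (hmG : 0 < mG) (d : Fin n → ℕ) (hd : ∀ i, 0 < d i)
    (K : ℕ) (hK : 0 < K) (lastO : Fin K) (hlastO : (lastO : ℕ) = K - 1)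
    (π' : Fin K → ℝ) (hπpos : ∀ k, 0 < π' k) (hπsum : ∑ k, π' k = 1)
    (Li : ∀ (k : Fin K) (i : Fin n), Matrix (Fin (d i)) (Fin (d i)) ℝ)
    (hLiLow : ∀ k i, ∀ a b : Fin (d i), a < b → Li k i a b = 0)
    (hLiInv : ∀ k i, IsUnit (Li k i))
    (LG : Fin K → Matrix (Fin mG) (Fin mG) ℝ)
    (hLGLow : ∀ k, ∀ a b : Fin mG, a < b → LG k a b = 0)
    (hLGInv : ∀ k, IsUnit (LG k))
    (LGi : ∀ (k : Fin K) (i : Fin n), Matrix (Fin mG) (Fin (d i)) ℝ)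
    (μ : Fin K → (((i : Fin n) × Fin (d i)) ⊕ Fin mG) → ℝ)
    (π₀ : ℝ) (hπ₀ : π₀ ∈ Set.Ioo (0 : ℝ) 1)
    (πn : Fin (K + 1) → ℝ)
    (Lin : ∀ (k : Fin (K + 1)) (i : Fin n), Matrix (Fin (d i)) (Fin (d i)) ℝ)
    (hLinLow : ∀ k i, ∀ a b : Fin (d i), a < b → Lin k i a b = 0)
    (hLinInv : ∀ k i, IsUnit (Lin k i))
    (LGn : Fin (K + 1) → Matrix (Fin mG) (Fin mG) ℝ)
    (hLGnLow : ∀ k, ∀ a b : Fin mG, a < b → LGn k a b = 0)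
    (hLGnInv : ∀ k, IsUnit (LGn k))
    (LGin : ∀ (k : Fin (K + 1)) (i : Fin n), Matrix (Fin mG) (Fin (d i)) ℝ)
    (μn : Fin (K + 1) → (((i : Fin n) × Fin (d i)) ⊕ Fin mG) → ℝ)
    (hπ1 : ∀ k : Fin K, k ≠ lastO → πn k.castSucc = π' k)
    (hπ2 : πn lastO.castSucc = π₀ * π' lastO)
    (hπ3 : πn (Fin.last K) = (1 - π₀) * π' lastO)
    (hcomp : ∀ k : Fin K, μn k.castSucc = μ k ∧ Lin k.castSucc = Li k ∧
      LGn k.castSucc = LG k ∧ LGin k.castSucc = LGi k)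
    (hnewμG : ∀ g : Fin mG, μn (Fin.last K) (Sum.inr g) = μ lastO (Sum.inr g))
    (hnewLG : LGn (Fin.last K) = LG lastO)
    -- the subset `I`, outside of which the new component agrees with component `K`
    (I : Set (Fin n))
    (hnewμb : ∀ i ∉ I, ∀ a : Fin (d i),
      μn (Fin.last K) (Sum.inl ⟨i, a⟩) = μ lastO (Sum.inl ⟨i, a⟩))
    (hnewLi : ∀ i ∉ I, Lin (Fin.last K) i = Li lastO i)
    (hnewLGi : ∀ i ∉ I, LGin (Fin.last K) i = LGi lastO i)
    -- the marginal mixture density `m(θ_G)` and the weights `w_k(θ_G)`, `w'_k(θ_G)`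
    (m : (Fin mG → ℝ) → ℝ)
    (hm : m = fun θG => ∑ k : Fin K, π' k *
      gaussianPdf (fun g => μ k (Sum.inr g)) (LG k * (LG k)ᵀ)⁻¹ θG)
    (w : Fin K → (Fin mG → ℝ) → ℝ)
    (hw : ∀ k θG, 0 < m θG → w k θG = π' k *
      gaussianPdf (fun g => μ k (Sum.inr g)) (LG k * (LG k)ᵀ)⁻¹ θG / m θG)
    (wn : Fin (K + 1) → (Fin mG → ℝ) → ℝ)
    (hwn : ∀ k θG, 0 < m θG → wn k θG =
      πn k * gaussianPdf (fun g => μn k (Sum.inr g)) (LGn k * (LGn k)ᵀ)⁻¹ θG /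
        ∑ k' : Fin (K + 1), πn k' *
          gaussianPdf (fun g => μn k' (Sum.inr g)) (LGn k' * (LGn k')ᵀ)⁻¹ θG) :
    ∀ i ∉ I, ∀ θG : Fin mG → ℝ, 0 < m θG → ∀ bi : Fin (d i) → ℝ,
      (∑ k : Fin (K + 1), wn k θG *
        gaussianPdf
          ((fun a => μn k (Sum.inl ⟨i, a⟩)) -
            ((Lin k i)ᵀ)⁻¹ *ᵥ ((LGin k i)ᵀ *ᵥ (θG - fun g => μn k (Sum.inr g))))
          (Lin k i * (Lin k i)ᵀ)⁻¹ bi) =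
      ∑ k : Fin K, w k θG *
        gaussianPdf
          ((fun a => μ k (Sum.inl ⟨i, a⟩)) -
            ((Li k i)ᵀ)⁻¹ *ᵥ ((LGi k i)ᵀ *ᵥ (θG - fun g => μ k (Sum.inr g))))
          (Li k i * (Li k i)ᵀ)⁻¹ bi := by
  intro i hi θG hpos bi
  have hμG : (fun g => μn (Fin.last K) (Sum.inr g)) = fun g => μ lastO (Sum.inr g) :=
    funext hnewμG
  have hμb : (fun a => μn (Fin.last K) (Sum.inl ⟨i, a⟩)) = fun a => μ lastO (Sum.inl ⟨i, a⟩) :=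
    funext (hnewμb i hi)
  have hden : ∑ k' : Fin (K + 1), πn k' *
      gaussianPdf (fun g => μn k' (Sum.inr g)) (LGn k' * (LGn k')ᵀ)⁻¹ θG = m θG := by
    rw [hm]
    refine sum_split_last lastO π' _ πn _ π₀ hπ1 hπ2 hπ3 (fun k => ?_) ?_
    · obtain ⟨h1, -, h3, -⟩ := hcomp k
      rw [h1, h3]
    · rw [hμG, hnewLG]
  simp only [hwn _ θG hpos, hw _ θG hpos, hden, mul_div_assoc, mul_assoc]
  refine sum_split_last lastO π' _ πn _ π₀ hπ1 hπ2 hπ3 (fun k => ?_) ?_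
  · obtain ⟨h1, h2, h3, h4⟩ := hcomp k
    rw [h1, h2, h3, h4]
  · rw [hμG, hμb, hnewLG, hnewLi i hi, hnewLGi i hi]
end

section
/- Let L be a matrix of the state-space block structure below, and let θ = (b₁,…,bₙ,θ_G) be a random vector on a probability space whose law is the multivariate Gaussian on ℝ^{p+m_G} with mean μ = (μ₁,…,μₙ,μ_G) and covariance matrix (L Lᵀ)⁻¹. Then, almost surely, E[bₙ | σ(θ_G)] = μₙ − Lₙ^{−⊤} L_{Gn}ᵀ (θ_G − μ_G), and for each i = 1,…,n−1, E[bᵢ | σ(b_{i+1}, θ_G)] = μᵢ − Lᵢ^{−⊤} L̃ᵢᵀ (b_{i+1} − μ_{i+1}) − Lᵢ^{−⊤} L_{Gi}ᵀ (θ_G − μ_G), where σ(·) denotes the σ-algebra generated by the indicated random vectors and conditional expectation is taken componentwise. -/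
/-!
Write `ψ = Lᵀ (θ - μ)`. Since `((L Lᵀ)⁻¹)⁻¹ = L Lᵀ`, the quadratic form in the density of `θ` is
`|ψ|²`, so by the linear change of variables `ψ` has a density proportional to `exp (-|y|² / 2)`
(`map_whiten`). This law is invariant under reflecting any set of coordinates (`map_flipOn_whiten`),
and that replaces independence: a linear form in the coordinates `ψᵢ` has zero conditional
expectation given any function of the other coordinates (`condExp_whiten_eq_zero`).

The block structure makes `Lᵀ`, hence `L⁻ᵀ`, block upper triangular, so `b_{i+1}` and `θ_G` are
functions of the `ψⱼ` with `j > i` and of `ψ_G`. The `i`-th block row of `ψ = Lᵀ (θ - μ)` reads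
`ψᵢ = Lᵢᵀ (bᵢ - μᵢ) + L̃ᵢᵀ (b_{i+1} - μ_{i+1}) + L_{Gi}ᵀ (θ_G - μ_G)`, without the middle term for
the last block. Solving for `bᵢ` leaves the claimed regression function plus `Lᵢ⁻ᵀ ψᵢ`, which
vanishes in conditional expectation (`condExp_of_blockTriangular`).
-/

open MeasureTheory Matrix

/-! ### Reflections and the whitened Gaussian density -/

/-- Coordinate reflection: negates the coordinates in `s` and fixes the others. -/
def flipOn {ι : Type*} (s : ι → Prop) [DecidablePred s] (y : ι → ℝ) : ι → ℝ :=
  fun k => if s k then -y k else y k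

lemma measurePreserving_flipOn {ι : Type*} [Fintype ι] (s : ι → Prop) [DecidablePred s] :
    MeasurePreserving (flipOn s) (volume : Measure (ι → ℝ)) volume := by
  refine volume_preserving_pi (f := fun k x => if s k then -x else x) fun k => ?_
  by_cases h : s k
  · simpa [h] using Measure.measurePreserving_neg (volume : Measure ℝ)
  · simp only [h, if_false]
    exact MeasurePreserving.id _

/-- The unnormalized standard Gaussian density times `c`, truncated at `0` if `c < 0`. -/
noncomputable def stdDens {ι : Type*} [Fintype ι] (c : ℝ) (y : ι → ℝ) : ENNReal :=
  ENNReal.ofReal (c * Real.exp (-(1 / 2) * (y ⬝ᵥ y)))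

lemma measurable_stdDens {ι : Type*} [Fintype ι] (c : ℝ) :
    Measurable (stdDens (ι := ι) c) := by
  unfold stdDens dotProduct
  fun_prop

lemma stdDens_flipOn {ι : Type*} [Fintype ι] (c : ℝ) (s : ι → Prop) [DecidablePred s]
    (y : ι → ℝ) : stdDens c (flipOn s y) = stdDens c y := by
  have : flipOn s y ⬝ᵥ flipOn s y = y ⬝ᵥ y := by
    refine Finset.sum_congr rfl fun k _ => ?_
    by_cases h : s k <;> simp [flipOn, h]
  simp [stdDens, this]

/-- The precision matrix `L Lᵀ` turns the quadratic form of the density into `|Lᵀ (x - m)|²`. -/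
lemma gaussianPdf_eq {ι : Type*} [Fintype ι] [DecidableEq ι] (m : ι → ℝ)
    {L : Matrix ι ι ℝ} (hL : IsUnit L.det) (x : ι → ℝ) :
    ENNReal.ofReal (gaussianPdf m (L * Lᵀ)⁻¹ x) =
      stdDens ((2 * Real.pi) ^ (-(Fintype.card ι : ℝ) / 2) * (L * Lᵀ)⁻¹.det ^ (-(1 : ℝ) / 2))
        (Lᵀ *ᵥ (x - m)) := by
  have hS : IsUnit (L * Lᵀ).det := by simpa using hL
  have hq : (x - m) ⬝ᵥ ((L * Lᵀ) *ᵥ (x - m)) = (Lᵀ *ᵥ (x - m)) ⬝ᵥ (Lᵀ *ᵥ (x - m)) := by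
    rw [← mulVec_mulVec, dotProduct_mulVec, ← mulVec_transpose]
  rw [gaussianPdf, stdDens, nonsing_inv_nonsing_inv _ hS, hq]

/-- Whitening: the image of `N(m, (L Lᵀ)⁻¹)` under `x ↦ Lᵀ (x - m)` has, up to constants, the
standard Gaussian density. The values of the constants play no role. -/
lemma map_mvGaussian {ι : Type*} [Fintype ι] [DecidableEq ι] (m : ι → ℝ)
    {L : Matrix ι ι ℝ} (hL : IsUnit L.det) :
    ∃ (κ : ENNReal) (c : ℝ), κ ≠ ⊤ ∧
      (mvGaussian m (L * Lᵀ)⁻¹).map (fun x => Lᵀ *ᵥ (x - m)) =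
        κ • (volume : Measure (ι → ℝ)).withDensity (stdDens c) := by
  have hdet : Lᵀ.det ≠ 0 := by simpa using hL.ne_zero
  have hlin : Measurable (toLin' Lᵀ) := (LinearMap.continuous_of_finiteDimensional _).measurable
  have hsub : Measurable fun x : ι → ℝ => x - m := by fun_prop
  have hg : Measurable fun x : ι → ℝ => Lᵀ *ᵥ (x - m) := hlin.comp hsub
  refine ⟨ENNReal.ofReal |Lᵀ.det⁻¹|,
    (2 * Real.pi) ^ (-(Fintype.card ι : ℝ) / 2) * (L * Lᵀ)⁻¹.det ^ (-(1 : ℝ) / 2), ENNReal.ofReal_ne_top, ?_⟩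
  have hvol : (volume : Measure (ι → ℝ)).map (fun x => Lᵀ *ᵥ (x - m)) =
      ENNReal.ofReal |Lᵀ.det⁻¹| • volume := by
    rw [← Real.map_matrix_volume_pi_eq_smul_volume_pi hdet]
    conv_rhs => rw [← (measurePreserving_sub_right (volume : Measure (ι → ℝ)) m).map_eq]
    rw [Measure.map_map hlin hsub]
    rfl
  ext t ht
  rw [← withDensity_smul_measure, ← hvol, withDensity_apply _ ht,
    setLIntegral_map ht (measurable_stdDens _) hg, Measure.map_apply hg ht, mvGaussian,
    withDensity_apply _ (hg ht)]
  exact lintegral_congr fun x => gaussianPdf_eq m hL x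

lemma integrable_coord_stdDens {ι : Type*} [Fintype ι] [DecidableEq ι] (c : ℝ) (k : ι) :
    Integrable (fun y : ι → ℝ => y k) (volume.withDensity (stdDens c)) := by
  rw [integrable_withDensity_iff_integrable_smul' (measurable_stdDens c)
    (ae_of_all _ fun _ => ENNReal.ofReal_lt_top)]
  have h0 : Integrable fun x : ℝ => Real.exp (-(1 / 2) * x ^ 2) :=
    integrable_exp_neg_mul_sq (by norm_num)
  have h1 : Integrable fun x : ℝ => x * Real.exp (-(1 / 2) * x ^ 2) :=
    integrable_mul_exp_neg_mul_sq (by norm_num)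
  have h : Integrable (fun y : ι → ℝ =>
      ∏ j, (if j = k then y j else 1) * Real.exp (-(1 / 2) * y j ^ 2)) volume := by
    refine Integrable.fintype_prod (μ := fun _ => (volume : Measure ℝ))
      (f := fun j x => (if j = k then x else 1) * Real.exp (-(1 / 2) * x ^ 2)) fun j => ?_
    by_cases hj : j = k
    · simpa [hj] using h1
    · simpa [hj] using h0
  refine (h.const_mul (max c 0)).congr (ae_of_all _ fun y => ?_)
  have hexp : Real.exp (-(1 / 2) * (y ⬝ᵥ y)) = ∏ j, Real.exp (-(1 / 2) * y j ^ 2) := by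
    rw [← Real.exp_sum, dotProduct, Finset.mul_sum]
    simp only [sq]
  have hdens : (stdDens c y).toReal = max c 0 * Real.exp (-(1 / 2) * (y ⬝ᵥ y)) := by
    rw [stdDens, ENNReal.toReal_ofReal', max_mul_of_nonneg _ _ (Real.exp_pos _).le, zero_mul]
  simp only [Finset.prod_mul_distrib, hdens, hexp, smul_eq_mul]
  simp
  ring

/-- A singular `L` gives the zero measure: then `(L Lᵀ)⁻¹` is the junk value `0`, whose determinant
`0` enters the density with the exponent `-1/2`, and `0 ^ (-1/2) = 0`. -/
lemma isUnit_det_of_isProbabilityMeasure {ι : Type*} [Fintype ι] [DecidableEq ι] [Nonempty ι]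
    (m : ι → ℝ) (L : Matrix ι ι ℝ) (h : IsProbabilityMeasure (mvGaussian m (L * Lᵀ)⁻¹)) :
    IsUnit L.det := by
  by_contra hL
  have hS : ¬ IsUnit (L * Lᵀ).det := by simpa using hL
  have h0 : mvGaussian m (L * Lᵀ)⁻¹ = 0 := by
    simp only [mvGaussian, gaussianPdf, nonsing_inv_apply_not_isUnit _ hS, det_zero]
    rw [Real.zero_rpow (by norm_num)]
    simp
  exact IsProbabilityMeasure.ne_zero _ h0

/-! ### Conditional expectations in whitened coordinates -/

section Whitened

variable {ι : Type*} [Fintype ι] [DecidableEq ι] {L : Matrix ι ι ℝ}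
  {Ω : Type*} [MeasurableSpace Ω] {P : Measure Ω}
  {μ : ι → ℝ} {θ : Ω → ι → ℝ}

lemma measurable_whiten (hθ : Measurable θ) : Measurable fun ω => Lᵀ *ᵥ (θ ω - μ) := by
  have hlin : Measurable (toLin' Lᵀ) := (LinearMap.continuous_of_finiteDimensional _).measurable
  exact hlin.comp (hθ.sub_const μ)

lemma map_whiten (hL : IsUnit L.det) (hθ : Measurable θ)
    (hlaw : P.map θ = mvGaussian μ (L * Lᵀ)⁻¹) :
    ∃ (κ : ENNReal) (c : ℝ), κ ≠ ⊤ ∧ P.map (fun ω => Lᵀ *ᵥ (θ ω - μ)) =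
        κ • (volume : Measure (ι → ℝ)).withDensity (stdDens c) := by
  obtain ⟨κ, c, hκ, h⟩ := map_mvGaussian μ hL
  refine ⟨κ, c, hκ, ?_⟩
  have hg : Measurable fun x : ι → ℝ => Lᵀ *ᵥ (x - μ) := measurable_whiten measurable_id
  rw [← h, ← hlaw, Measure.map_map hg hθ]
  rfl

lemma integrable_whiten (hL : IsUnit L.det) (hθ : Measurable θ)
    (hlaw : P.map θ = mvGaussian μ (L * Lᵀ)⁻¹) (k : ι) :
    Integrable (fun ω => (Lᵀ *ᵥ (θ ω - μ)) k) P := by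
  obtain ⟨κ, c, hκ, h⟩ := map_whiten hL hθ hlaw
  have := (integrable_coord_stdDens c k).smul_measure hκ
  rw [← h, integrable_map_measure (measurable_pi_apply k).aestronglyMeasurable
    (measurable_whiten hθ).aemeasurable] at this
  exact this

lemma map_flipOn_whiten (hL : IsUnit L.det) (hθ : Measurable θ)
    (hlaw : P.map θ = mvGaussian μ (L * Lᵀ)⁻¹) (s : ι → Prop) [DecidablePred s] :
    MeasurePreserving (flipOn s) (P.map fun ω => Lᵀ *ᵥ (θ ω - μ))
      (P.map fun ω => Lᵀ *ᵥ (θ ω - μ)) := by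
  obtain ⟨κ, c, -, h⟩ := map_whiten hL hθ hlaw
  rw [h]
  have hf := measurePreserving_flipOn s
  refine MeasurePreserving.smul_measure ⟨hf.measurable, ?_⟩ κ
  ext t ht
  rw [Measure.map_apply hf.measurable ht, withDensity_apply _ (hf.measurable ht),
    withDensity_apply _ ht, ← hf.setLIntegral_comp_preimage ht (measurable_stdDens c)]
  exact lintegral_congr fun y => (stdDens_flipOn c s y).symm

/-- A linear form in the whitened coordinates from `s` has zero conditional expectation given any
function `Y` of the remaining whitened coordinates, because reflecting the coordinates in `s`
preserves the law and `Y` but changes the sign of the form. -/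
lemma condExp_whiten_eq_zero [IsProbabilityMeasure P] (hL : IsUnit L.det) (hθ : Measurable θ)
    (hlaw : P.map θ = mvGaussian μ (L * Lᵀ)⁻¹) (s : ι → Prop) [DecidablePred s]
    {β : Type*} [MeasurableSpace β] {Y : Ω → β} {H : (ι → ℝ) → β} (hH : Measurable H)
    (hY : ∀ ω, Y ω = H (Lᵀ *ᵥ (θ ω - μ))) (hHs : ∀ y, H (flipOn s y) = H y)
    (w : ι → ℝ) (hw : ∀ k, ¬ s k → w k = 0) :
    P[fun ω => w ⬝ᵥ (Lᵀ *ᵥ (θ ω - μ)) | MeasurableSpace.comap Y inferInstance] =ᵐ[P] 0 := by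
  have hψ : Measurable fun ω => Lᵀ *ᵥ (θ ω - μ) := measurable_whiten hθ
  have hYm : Measurable Y := by
    rw [show Y = H ∘ fun ω => Lᵀ *ᵥ (θ ω - μ) from funext hY]
    exact hH.comp hψ
  have hwm : Measurable fun y : ι → ℝ => w ⬝ᵥ y := by
    unfold dotProduct
    fun_prop
  have hint : Integrable (fun ω => w ⬝ᵥ (Lᵀ *ᵥ (θ ω - μ))) P :=
    integrable_finsetSum _ fun k _ => (integrable_whiten hL hθ hlaw k).const_mul (w k)
  symm
  refine ae_eq_condExp_of_forall_setIntegral_eq hYm.comap_le hint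
    (fun _ _ _ => (integrable_zero _ _ _).integrableOn) ?_ aestronglyMeasurable_zero
  rintro _ ⟨t, ht, rfl⟩ -
  have hpre : Y ⁻¹' t = (fun ω => Lᵀ *ᵥ (θ ω - μ)) ⁻¹' (H ⁻¹' t) := by
    ext ω
    simp [hY]
  have hfl := map_flipOn_whiten hL hθ hlaw s
  have hneg : ∀ y, w ⬝ᵥ flipOn s y = -(w ⬝ᵥ y) := fun y => by
    rw [dotProduct, dotProduct, ← Finset.sum_neg_distrib]
    refine Finset.sum_congr rfl fun k _ => ?_
    by_cases h : s k
    · simp [flipOn, h]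
    · simp [hw k h]
  have key : ∫ y in H ⁻¹' t, w ⬝ᵥ y ∂(P.map fun ω => Lᵀ *ᵥ (θ ω - μ)) =
      -∫ y in H ⁻¹' t, w ⬝ᵥ y ∂(P.map fun ω => Lᵀ *ᵥ (θ ω - μ)) := by
    conv_lhs => rw [← hfl.map_eq]
    rw [setIntegral_map (hH ht) hwm.aestronglyMeasurable hfl.measurable.aemeasurable]
    simp only [hneg, integral_neg]
    congr 3
    ext y
    simp [hHs]
  rw [hpre, ← setIntegral_map (hH ht) hwm.aestronglyMeasurable hψ.aemeasurable]
  simp only [Pi.zero_apply, integral_zero]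
  linarith

/-- The regression step: if `Lᵀ` is block triangular for `b`, the coordinates of `θ` of level above
`i` depend only on whitened coordinates of level above `i`. So if a coordinate of `θ` differs from
a function of such coordinates by a linear form in the whitened coordinates of level `i`, that
function is its conditional expectation. -/
lemma condExp_of_blockTriangular [IsProbabilityMeasure P] (hL : IsUnit L.det) (hθ : Measurable θ)
    (hlaw : P.map θ = mvGaussian μ (L * Lᵀ)⁻¹) {b : ι → ℕ} (hb : Lᵀ.BlockTriangular b) (i : ℕ)
    {β : Type*} [MeasurableSpace β] {K : (ι → ℝ) → β} (hK : Measurable K)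
    (hKb : ∀ x x' : ι → ℝ, (∀ q, i < b q → x q = x' q) → K x = K x')
    {f : β → ℝ} (hf : Measurable f) (w : ι → ℝ) (hw : ∀ k, b k ≠ i → w k = 0) (q : ι)
    (hq : ∀ x : ι → ℝ, x q = f (K x) + w ⬝ᵥ (Lᵀ *ᵥ (x - μ))) :
    P[fun ω => θ ω q | MeasurableSpace.comap (fun ω => K (θ ω)) inferInstance]
      =ᵐ[P] fun ω => f (K (θ ω)) := by
  have hdet : IsUnit Lᵀ.det := by simpa using hL
  have hinv : (Lᵀ)⁻¹.BlockTriangular b := by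
    have := Lᵀ.invertibleOfIsUnitDet hdet
    exact blockTriangular_inv_of_blockTriangular hb
  have hback : ∀ x : ι → ℝ, x = μ + (Lᵀ)⁻¹ *ᵥ (Lᵀ *ᵥ (x - μ)) := fun x => by
    rw [mulVec_mulVec, nonsing_inv_mul _ hdet, one_mulVec]
    simp
  have hlin : Measurable (toLin' (Lᵀ)⁻¹) :=
    (LinearMap.continuous_of_finiteDimensional _).measurable
  have hzero := condExp_whiten_eq_zero hL hθ hlaw (fun k => b k = i)
    (Y := fun ω => K (θ ω)) (H := fun y => K (μ + (Lᵀ)⁻¹ *ᵥ y))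
    (hK.comp (hlin.const_add μ)) (fun ω => by rw [← hback])
    (fun y => hKb _ _ fun r hr => by
      simp only [Pi.add_apply, mulVec, dotProduct]
      congr 1
      refine Finset.sum_congr rfl fun k _ => ?_
      by_cases hk : b k = i
      · simp [hinv (hk ▸ hr : b k < b r)]
      · simp [flipOn, hk]) w hw
  have hW : Integrable (fun ω => w ⬝ᵥ (Lᵀ *ᵥ (θ ω - μ))) P :=
    integrable_finsetSum _ fun k _ => (integrable_whiten hL hθ hlaw k).const_mul (w k)
  have hX : Integrable (fun ω => θ ω q) P := by
    have h : (fun ω => θ ω q) =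
        fun ω => μ q + ∑ k, (Lᵀ)⁻¹ q k * (Lᵀ *ᵥ (θ ω - μ)) k := by
      ext ω
      exact congrFun (hback (θ ω)) q
    rw [h]
    exact (integrable_const _).add
      (integrable_finsetSum _ fun k _ => (integrable_whiten hL hθ hlaw k).const_mul _)
  have hF : Integrable (fun ω => f (K (θ ω))) P := by
    refine (hX.sub hW).congr (ae_of_all _ fun ω => ?_)
    simp only [Pi.sub_apply, hq (θ ω)]
    ring
  have hle : MeasurableSpace.comap (fun ω => K (θ ω)) inferInstance ≤ ‹MeasurableSpace Ω› :=
    (hK.comp hθ).comap_le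
  have hFm : StronglyMeasurable[MeasurableSpace.comap (fun ω => K (θ ω)) inferInstance]
      (fun ω => f (K (θ ω))) :=
    (hf.comp (comap_measurable _)).stronglyMeasurable
  have hdec : (fun ω => θ ω q) =
      (fun ω => f (K (θ ω))) + fun ω => w ⬝ᵥ (Lᵀ *ᵥ (θ ω - μ)) := funext fun ω => hq (θ ω)
  rw [hdec]
  filter_upwards [condExp_add hF hW (MeasurableSpace.comap (fun ω => K (θ ω)) inferInstance),
    hzero] with ω h1 h2
  rw [h1, Pi.add_apply, h2, condExp_of_stronglyMeasurable hle hFm hF]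
  simp

end Whitened

/-! ### The state-space block structure -/

/-- Levels of the coordinates: `bᵢ` has level `i`, and `θ_G` lies above all the `bᵢ`. -/
def level {n mG : ℕ} (d : ℕ → ℕ) : (((i : Fin n) × Fin (d i)) ⊕ Fin mG) → ℕ :=
  Sum.elim (fun x => x.1) fun _ => n

/-- Row `a` of `A`, placed in the coordinates of the block `bᵢ` and extended by zero. -/
noncomputable def blockRow {n mG : ℕ} {d : ℕ → ℕ} (i : Fin n)
    (A : Matrix (Fin (d i)) (Fin (d i)) ℝ) (a : Fin (d i)) :
    (((i : Fin n) × Fin (d i)) ⊕ Fin mG) → ℝ :=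
  ∑ c, A a c • Pi.single (Sum.inl ⟨i, c⟩) 1

lemma blockRow_eq_zero {n mG : ℕ} {d : ℕ → ℕ} (i : Fin n)
    (A : Matrix (Fin (d i)) (Fin (d i)) ℝ) (a : Fin (d i))
    (k : ((i : Fin n) × Fin (d i)) ⊕ Fin mG) (hk : level d k ≠ i) : blockRow i A a k = 0 := by
  rw [blockRow, Finset.sum_apply]
  refine Finset.sum_eq_zero fun c _ => ?_
  have : k ≠ Sum.inl ⟨i, c⟩ := by
    rintro rfl
    exact hk rfl
  simp [this]

lemma blockRow_dotProduct {n mG : ℕ} {d : ℕ → ℕ} (i : Fin n)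
    (A : Matrix (Fin (d i)) (Fin (d i)) ℝ) (a : Fin (d i))
    (y : (((i : Fin n) × Fin (d i)) ⊕ Fin mG) → ℝ) :
    blockRow i A a ⬝ᵥ y = (A *ᵥ fun c => y (Sum.inl ⟨i, c⟩)) a := by
  simp only [blockRow, sum_dotProduct, smul_dotProduct, single_one_dotProduct, smul_eq_mul]
  rfl

/-- For the state-space block Cholesky structure, if `θ` is Gaussian with mean `μ` and
covariance `(L Lᵀ)⁻¹`, then almost surely (componentwise)
`E[bₙ | σ(θ_G)] = μₙ - Lₙ⁻ᵀ L_{Gn}ᵀ (θ_G - μ_G)` and, for `i = 1, …, n-1`,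
`E[bᵢ | σ(b_{i+1}, θ_G)] = μᵢ - Lᵢ⁻ᵀ L̃ᵢᵀ (b_{i+1} - μ_{i+1}) - Lᵢ⁻ᵀ L_{Gi}ᵀ (θ_G - μ_G)`. -/
theorem stmt14 (n mG : ℕ) (hn : 0 < n) (hmG : 0 < mG) (d : ℕ → ℕ) (hd : ∀ i, 0 < d i)
    (Li : ∀ i : ℕ, Matrix (Fin (d i)) (Fin (d i)) ℝ)
    (hLiLow : ∀ i, ∀ a b : Fin (d i), a < b → Li i a b = 0)
    (hLiInv : ∀ i, IsUnit (Li i))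
    (Lt : ∀ i : ℕ, Matrix (Fin (d (i + 1))) (Fin (d i)) ℝ)
    (LGi : ∀ i : ℕ, Matrix (Fin mG) (Fin (d i)) ℝ)
    (LG : Matrix (Fin mG) (Fin mG) ℝ)
    (hLGLow : ∀ a b : Fin mG, a < b → LG a b = 0)
    (hLGInv : IsUnit LG)
    (L : Matrix (((i : Fin n) × Fin (d i)) ⊕ Fin mG) (((i : Fin n) × Fin (d i)) ⊕ Fin mG) ℝ)
    (hdiag : ∀ (i : Fin n) (a b : Fin (d i)), L (Sum.inl ⟨i, a⟩) (Sum.inl ⟨i, b⟩) = Li i a b)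
    (hsub : ∀ (i j : Fin n) (h : (i : ℕ) = (j : ℕ) + 1) (a : Fin (d i)) (b : Fin (d j)),
      L (Sum.inl ⟨i, a⟩) (Sum.inl ⟨j, b⟩) = Lt j (Fin.cast (congrArg d h) a) b)
    (hzero : ∀ i j : Fin n, (i : ℕ) ≠ (j : ℕ) → (i : ℕ) ≠ (j : ℕ) + 1 →
      ∀ (a : Fin (d i)) (b : Fin (d j)), L (Sum.inl ⟨i, a⟩) (Sum.inl ⟨j, b⟩) = 0)
    (htop : ∀ (i : Fin n) (a : Fin (d i)) (g : Fin mG), L (Sum.inl ⟨i, a⟩) (Sum.inr g) = 0)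
    (hbot : ∀ (g : Fin mG) (i : Fin n) (a : Fin (d i)),
      L (Sum.inr g) (Sum.inl ⟨i, a⟩) = LGi i g a)
    (hG : ∀ g h : Fin mG, L (Sum.inr g) (Sum.inr h) = LG g h)
    {Ω : Type*} [MeasurableSpace Ω] (P : Measure Ω) [IsProbabilityMeasure P]
    (μ : (((i : Fin n) × Fin (d i)) ⊕ Fin mG) → ℝ)
    (θ : Ω → (((i : Fin n) × Fin (d i)) ⊕ Fin mG) → ℝ) (hθ : Measurable θ)
    (hlaw : P.map θ = mvGaussian μ (L * Lᵀ)⁻¹) :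
    (∀ i : Fin n, (i : ℕ) + 1 = n → ∀ a : Fin (d i),
      P[(fun ω => θ ω (Sum.inl ⟨i, a⟩)) |
          MeasurableSpace.comap (fun ω (g : Fin mG) => θ ω (Sum.inr g)) inferInstance]
        =ᵐ[P] fun ω => μ (Sum.inl ⟨i, a⟩) -
          (((Li i)ᵀ)⁻¹ *ᵥ ((LGi i)ᵀ *ᵥ
            (fun g : Fin mG => θ ω (Sum.inr g) - μ (Sum.inr g)))) a) ∧
    (∀ (i j : Fin n) (hij : (j : ℕ) = (i : ℕ) + 1), ∀ a : Fin (d i),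
      P[(fun ω => θ ω (Sum.inl ⟨i, a⟩)) |
          MeasurableSpace.comap (fun ω =>
            ((fun c : Fin (d j) => θ ω (Sum.inl ⟨j, c⟩)),
             (fun g : Fin mG => θ ω (Sum.inr g)))) inferInstance]
        =ᵐ[P] fun ω => μ (Sum.inl ⟨i, a⟩) -
          (((Li i)ᵀ)⁻¹ *ᵥ ((Lt i)ᵀ *ᵥ fun c : Fin (d ((i : ℕ) + 1)) =>
              θ ω (Sum.inl ⟨j, Fin.cast (congrArg d hij).symm c⟩) -
                μ (Sum.inl ⟨j, Fin.cast (congrArg d hij).symm c⟩))) a -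
          (((Li i)ᵀ)⁻¹ *ᵥ ((LGi i)ᵀ *ᵥ
            (fun g : Fin mG => θ ω (Sum.inr g) - μ (Sum.inr g)))) a) := by
  have hnz : Nonempty (((i : Fin n) × Fin (d i)) ⊕ Fin mG) := ⟨Sum.inr ⟨0, hmG⟩⟩
  have hL : IsUnit L.det := isUnit_det_of_isProbabilityMeasure μ L
    (hlaw ▸ Measure.isProbabilityMeasure_map hθ.aemeasurable)
  have hb : Lᵀ.BlockTriangular (level d) := by
    rintro (⟨i, a⟩ | g) (⟨j, c⟩ | h) hlt
    · have hlt' : (j : ℕ) < i := hlt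
      exact hzero j i (by omega) (by omega) c a
    · have hlt' : n < (i : ℕ) := hlt
      omega
    · exact htop j c g
    · exact absurd hlt (lt_irrefl n)
  have hLiT : ∀ i, IsUnit ((Li i)ᵀ).det := fun i => by
    rw [det_transpose]
    exact (isUnit_iff_isUnit_det _).1 (hLiInv i)
  -- Solving the block equation `ψ = Lᵢᵀ v + r` for the coordinate `a` of `v`.
  have hsolve : ∀ (i : ℕ) (a : Fin (d i)) (v r ψ : Fin (d i) → ℝ), ψ = (Li i)ᵀ *ᵥ v + r →
      (((Li i)ᵀ)⁻¹ *ᵥ ψ) a = v a + (((Li i)ᵀ)⁻¹ *ᵥ r) a := by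
    rintro i a v r ψ rfl
    rw [mulVec_add, mulVec_mulVec, nonsing_inv_mul _ (hLiT i), one_mulVec, Pi.add_apply]
  have hexpand : ∀ (v : (((i : Fin n) × Fin (d i)) ⊕ Fin mG) → ℝ) (i : Fin n) (a : Fin (d i)),
      (Lᵀ *ᵥ v) (Sum.inl ⟨i, a⟩) =
        ∑ j : Fin n, (∑ c, L (Sum.inl ⟨j, c⟩) (Sum.inl ⟨i, a⟩) * v (Sum.inl ⟨j, c⟩)) +
          ((LGi i)ᵀ *ᵥ fun g => v (Sum.inr g)) a := fun v i a => by
    simp [mulVec, dotProduct, Fintype.sum_sum_type, Fintype.sum_sigma, hbot]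
  refine ⟨fun i hi a => ?_, fun i j hij a => ?_⟩
  · refine condExp_of_blockTriangular hL hθ hlaw hb i (K := fun x (g : Fin mG) => x (Sum.inr g))
      (f := fun y => μ (Sum.inl ⟨i, a⟩) - (((Li i)ᵀ)⁻¹ *ᵥ ((LGi i)ᵀ *ᵥ
            (fun g : Fin mG => y g - μ (Sum.inr g)))) a)
      (by fun_prop) ?_ (by unfold mulVec dotProduct; fun_prop) (blockRow i ((Li i)ᵀ)⁻¹ a)
      (blockRow_eq_zero i _ a) _ fun x => ?_
    · exact fun x x' h => funext fun g => h _ i.isLt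
    · rw [blockRow_dotProduct, hsolve i a (fun c => (x - μ) (Sum.inl ⟨i, c⟩))
        ((LGi i)ᵀ *ᵥ fun g => (x - μ) (Sum.inr g))
        (fun c => (Lᵀ *ᵥ (x - μ)) (Sum.inl ⟨i, c⟩))]
      · simp only [Pi.sub_apply]
        ring
      · ext a'
        rw [hexpand, Finset.sum_eq_single i]
        · simp [hdiag, mulVec, dotProduct]
        · intro j _ hj
          have hj' : (j : ℕ) ≠ i := fun h => hj (Fin.ext h)
          exact Finset.sum_eq_zero fun c _ => by
            rw [hzero j i hj' (by omega), zero_mul]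
        · simp
  · obtain ⟨j, hj⟩ := j
    dsimp only at hij
    subst hij
    refine condExp_of_blockTriangular hL hθ hlaw hb i
      (K := fun x => ((fun c : Fin (d (i + 1)) => x (Sum.inl ⟨⟨i + 1, hj⟩, c⟩)),
        (fun g : Fin mG => x (Sum.inr g))))
      (f := fun y => μ (Sum.inl ⟨i, a⟩) -
          (((Li i)ᵀ)⁻¹ *ᵥ ((Lt i)ᵀ *ᵥ fun c : Fin (d ((i : ℕ) + 1)) =>
              y.1 c - μ (Sum.inl ⟨⟨i + 1, hj⟩, c⟩))) a -
          (((Li i)ᵀ)⁻¹ *ᵥ ((LGi i)ᵀ *ᵥ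
            (fun g : Fin mG => y.2 g - μ (Sum.inr g)))) a)
      (by fun_prop) ?_ (by unfold mulVec dotProduct; fun_prop) (blockRow i ((Li i)ᵀ)⁻¹ a)
      (blockRow_eq_zero i _ a) _ fun x => ?_
    · exact fun x x' h => Prod.ext (funext fun c => h _ (Nat.lt_succ_self _))
        (funext fun g => h _ i.isLt)
    · rw [blockRow_dotProduct, hsolve i a (fun c => (x - μ) (Sum.inl ⟨i, c⟩))
        (((Lt i)ᵀ *ᵥ fun c => (x - μ) (Sum.inl ⟨⟨i + 1, hj⟩, c⟩)) +
          (LGi i)ᵀ *ᵥ fun g => (x - μ) (Sum.inr g))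
        (fun c => (Lᵀ *ᵥ (x - μ)) (Sum.inl ⟨i, c⟩)), mulVec_add]
      · simp only [Pi.sub_apply, Pi.add_apply]
        ring
      · ext a'
        have hne : i ≠ ⟨i + 1, hj⟩ := fun h => by
          have := congrArg Fin.val h
          dsimp only at this
          omega
        rw [hexpand, Finset.sum_eq_add i ⟨i + 1, hj⟩ hne]
        · simp [hdiag, hsub ⟨i + 1, hj⟩ i rfl, mulVec, dotProduct, add_assoc]
        · intro j _ hj'
          have h1 : (j : ℕ) ≠ i := fun h => hj'.1 (Fin.ext h)
          have h2 : (j : ℕ) ≠ i + 1 := fun h => hj'.2 (Fin.ext h)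
          exact Finset.sum_eq_zero fun c _ => by rw [hzero j i h1 h2, zero_mul]
        · simp
        · simp
end
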